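/- Let C ≠ 0 be a real constant, let L_M : ℝ → ℝ be differentiable, and let q : ℝ → ℝ be twice differentiable. For the Lagrangian L(x, v) = (1/2)·L_M(x)·v² − x²/(2C) and the content function D(x, v) = (1/6)·L_M'(x)·v³, the expression d/dt[∂L/∂v(q(t), q̇(t))] − ∂L/∂x(q(t), q̇(t)) + ∂D/∂v(q(t), q̇(t)) equals L_M(q(t))·q̈(t) + L_M'(q(t))·q̇(t)² + q(t)/C for every t; hence the Lagrange equation with this content function reproduces exactly the true meminductor–capacitor equation of motion. -/

import Mathlib

/-!
For a position-dependent inertia `M`, the momentum is `M(q) q̇`, so its time derivative contains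
`M'(q) q̇²`; but `∂L/∂x` takes away half of that term, because the kinetic energy itself depends on
position. The velocity derivative of `(1/6) M'(x) v³` is `(1/2) M'(x) v²`, exactly the missing half.
The circuit is the case `M = L_M`, with the capacitor energy `x² / (2C)` as potential.
-/

section LagrangeEquation

variable {𝕜 : Type*} [NontriviallyNormedField 𝕜]

/-- The Euler–Lagrange expression `d/dt (∂L/∂v) - ∂L/∂x` of the Lagrangian `L x v` along the
path `q`, at time `t`. The derivatives are `deriv`, hence `0` where they do not exist. -/
noncomputable def eulerLagrange (L : 𝕜 → 𝕜 → 𝕜) (q : 𝕜 → 𝕜) (t : 𝕜) : 𝕜 :=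
  deriv (fun s => deriv (L (q s)) (deriv q s)) t - deriv (fun x => L x (deriv q t)) (q t)

/-- The Lagrange expression with content function: the Euler–Lagrange expression of `L` plus the
generalized dissipative force `∂D/∂v` of the content function `D x v`, along the path `q`. -/
noncomputable def lagrangeWithContent (L D : 𝕜 → 𝕜 → 𝕜) (q : 𝕜 → 𝕜) (t : 𝕜) : 𝕜 :=
  eulerLagrange L q t + deriv (D (q t)) (deriv q t)

/-- The Lagrangian "kinetic minus potential energy" of a system with one degree of freedom, inertia
`M x` and potential `V x`; in a circuit, `x` is a charge and `M` an incremental meminductance. -/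
def naturalLagrangian (M V : 𝕜 → 𝕜) (x v : 𝕜) : 𝕜 :=
  (1 / 2) * M x * v ^ 2 - V x

/-- The content function, cubic in the velocity, that compensates the position dependence of the
inertia `M` in the Lagrange equation. -/
noncomputable def inertialContent (M : 𝕜 → 𝕜) (x v : 𝕜) : 𝕜 :=
  (1 / 6) * deriv M x * v ^ 3

variable {M V q : 𝕜 → 𝕜} {t : 𝕜}

lemma deriv_naturalLagrangian_position {x : 𝕜} (hM : DifferentiableAt 𝕜 M x)
    (hV : DifferentiableAt 𝕜 V x) (v : 𝕜) :
    deriv (fun y => naturalLagrangian M V y v) x = (1 / 2) * deriv M x * v ^ 2 - deriv V x :=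
  (((hM.hasDerivAt.const_mul (1 / 2)).mul_const (v ^ 2)).sub hV.hasDerivAt).deriv

lemma deriv_inertia_mul_velocity (hM : DifferentiableAt 𝕜 M (q t)) (hq : DifferentiableAt 𝕜 q t)
    (hq' : DifferentiableAt 𝕜 (deriv q) t) :
    deriv (fun s => M (q s) * deriv q s) t =
      M (q t) * deriv (deriv q) t + deriv M (q t) * deriv q t ^ 2 := by
  have hMq : HasDerivAt (fun s => M (q s)) (deriv M (q t) * deriv q t) t :=
    hM.hasDerivAt.comp t hq.hasDerivAt
  rw [(hMq.fun_mul hq'.hasDerivAt).deriv]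
  ring

variable [CharZero 𝕜]

lemma deriv_naturalLagrangian_velocity (M V : 𝕜 → 𝕜) (x v : 𝕜) :
    deriv (naturalLagrangian M V x) v = M x * v := by
  have h : HasDerivAt (naturalLagrangian M V x) ((1 / 2) * M x * ((2 : ℕ) * v ^ 1)) v :=
    ((hasDerivAt_pow 2 v).const_mul ((1 / 2) * M x)).sub_const (V x)
  rw [h.deriv]
  ring

lemma deriv_inertialContent_velocity (M : 𝕜 → 𝕜) (x v : 𝕜) :
    deriv (inertialContent M x) v = (1 / 2) * deriv M x * v ^ 2 := by
  have h : HasDerivAt (inertialContent M x) ((1 / 6) * deriv M x * ((3 : ℕ) * v ^ 2)) v :=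
    (hasDerivAt_pow 3 v).const_mul ((1 / 6) * deriv M x)
  rw [h.deriv]
  ring

lemma deriv_sq_div_two_mul (C x : 𝕜) : deriv (fun y => y ^ 2 / (2 * C)) x = x / C := by
  have h : HasDerivAt (fun y => y ^ 2 / (2 * C)) (2 * x / (2 * C)) x := by
    simpa using (hasDerivAt_pow 2 x).div_const (2 * C)
  rw [h.deriv, mul_div_mul_left x C two_ne_zero]

lemma eulerLagrange_naturalLagrangian (hM : DifferentiableAt 𝕜 M (q t))
    (hV : DifferentiableAt 𝕜 V (q t)) (hq : DifferentiableAt 𝕜 q t)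
    (hq' : DifferentiableAt 𝕜 (deriv q) t) :
    eulerLagrange (naturalLagrangian M V) q t =
      M (q t) * deriv (deriv q) t + (1 / 2) * deriv M (q t) * deriv q t ^ 2 + deriv V (q t) := by
  simp only [eulerLagrange, deriv_naturalLagrangian_velocity]
  rw [deriv_inertia_mul_velocity hM hq hq', deriv_naturalLagrangian_position hM hV]
  ring

theorem stmt6_general (hM : DifferentiableAt 𝕜 M (q t)) (hV : DifferentiableAt 𝕜 V (q t))
    (hq : DifferentiableAt 𝕜 q t) (hq' : DifferentiableAt 𝕜 (deriv q) t) :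
    lagrangeWithContent (naturalLagrangian M V) (inertialContent M) q t =
      M (q t) * deriv (deriv q) t + deriv M (q t) * deriv q t ^ 2 + deriv V (q t) := by
  rw [lagrangeWithContent, eulerLagrange_naturalLagrangian hM hV hq hq',
    deriv_inertialContent_velocity]
  ring

end LagrangeEquation

/-- With the naive Lagrangian `L(x, v) = (1/2) L_M(x) v² - x² / (2C)` and the
content function `D(x, v) = (1/6) L_M'(x) v³`, the Lagrange–Rayleigh
expression along the loop charge `q` equals the true meminductor–capacitor
equation-of-motion expression `L_M(q) q̈ + L_M'(q) q̇² + q / C`. -/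
theorem stmt6 (C : ℝ) (hC : C ≠ 0) (LM q : ℝ → ℝ)
    (hLM : Differentiable ℝ LM)
    (hq : Differentiable ℝ q) (hq' : Differentiable ℝ (deriv q)) :
    ∀ t : ℝ,
      deriv (fun s =>
          deriv (fun v => (1 / 2) * LM (q s) * v ^ 2 - (q s) ^ 2 / (2 * C))
            (deriv q s)) t
        - deriv (fun x => (1 / 2) * LM x * (deriv q t) ^ 2 - x ^ 2 / (2 * C)) (q t)
        + deriv (fun v => (1 / 6) * deriv LM (q t) * v ^ 3) (deriv q t)
      = LM (q t) * deriv (deriv q) t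
          + deriv LM (q t) * (deriv q t) ^ 2 + q t / C := by
  intro t
  have hV : DifferentiableAt ℝ (fun x => x ^ 2 / (2 * C)) (q t) := by fun_prop
  rw [← deriv_sq_div_two_mul C (q t)]
  exact stmt6_general (hLM (q t)) hV (hq t) (hq' t)
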